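/- arXiv:2507.10170 — 6 statements merged into one kernel-verified Lean document; each statement's English description precedes it below -/
import Mathlib

section
/- Let N be a positive integer, I R : Fin N → ℕ families of positive integers, and suppose a tensor X : (∀ n : Fin N, Fin (I n)) → ℝ admits a Tucker decomposition with core G : (∀ n : Fin N, Fin (R n)) → ℝ and factor matrices A n : Fin (I n) → Fin (R n) → ℝ, i.e., X i = ∑_{r : ∀ n, Fin (R n)} G r * ∏_{n : Fin N} A n (i n) (r n). Then for every mode k : Fin N, the mode-k unfolding of X (the generalized unfolding along the singleton subset {k}) has matrix rank at most R k. -/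
/-- The generalized unfolding of a tensor `X` along a subset `S` of its modes:
rows are indexed by the multi-indices of the modes in `S`, columns by the
multi-indices of the remaining modes. -/
def unfolding {N : ℕ} (I : Fin N → ℕ) (S : Finset (Fin N))
    (X : (∀ n : Fin N, Fin (I n)) → ℝ) :
    Matrix ((n : {m : Fin N // m ∈ S}) → Fin (I n.val))
           ((n : {m : Fin N // m ∉ S}) → Fin (I n.val)) ℝ :=
  Matrix.of fun r c =>
    X (fun n => if h : n ∈ S then r ⟨n, h⟩ else c ⟨n, h⟩)

/-- If an order-`N` tensor admits a Tucker decomposition with Tucker ranks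
`(R 0, …, R (N-1))`, then its mode-`k` unfolding has matrix rank at most `R k`. -/
theorem tucker_mode_unfolding_rank_le
    (N : ℕ) (hN : 0 < N)
    (I R : Fin N → ℕ) (hI : ∀ n : Fin N, 0 < I n) (hR : ∀ n : Fin N, 0 < R n)
    (X : (∀ n : Fin N, Fin (I n)) → ℝ)
    (G : (∀ n : Fin N, Fin (R n)) → ℝ)
    (A : ∀ n : Fin N, Fin (I n) → Fin (R n) → ℝ)
    (hX : ∀ i : ∀ n : Fin N, Fin (I n),
      X i = ∑ r : ∀ n : Fin N, Fin (R n), G r * ∏ n : Fin N, A n (i n) (r n))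
    (k : Fin N) :
    (unfolding I ({k} : Finset (Fin N)) X).rank ≤ R k := by
  classical
  let B : Matrix ((n : {m : Fin N // m ∈ ({k} : Finset (Fin N))}) → Fin (I n.val))
      (Fin (R k)) ℝ :=
    Matrix.of fun r q => A k (r ⟨k, Finset.mem_singleton_self k⟩) q
  let C : Matrix (Fin (R k))
      ((n : {m : Fin N // m ∉ ({k} : Finset (Fin N))}) → Fin (I n.val)) ℝ :=
    Matrix.of fun q c => ∑ r : ∀ n : Fin N, Fin (R n), if r k = q then
      G r * ∏ n : Fin N, (if h : n ∈ ({k} : Finset (Fin N)) then 1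
        else A n (c ⟨n, h⟩) (r n)) else 0
  have hBC : unfolding I ({k} : Finset (Fin N)) X = B * C := by
    ext r c
    simp only [unfolding, Matrix.mul_apply, Matrix.of_apply, B, C, hX, Finset.mul_sum]
    rw [Finset.sum_comm]
    refine Finset.sum_congr rfl fun s _ => ?_
    simp only [mul_ite, mul_zero, Finset.sum_ite_eq, Finset.mem_univ, if_true]
    rw [mul_left_comm]
    congr 1
    rw [← Finset.mul_prod_erase Finset.univ _ (Finset.mem_univ k),
      ← Finset.mul_prod_erase Finset.univ (fun n => dite (n ∈ ({k} : Finset (Fin N)))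
        (fun _ => (1 : ℝ)) (fun h => A n (c ⟨n, h⟩) (s n))) (Finset.mem_univ k)]
    rw [dif_pos (Finset.mem_singleton_self k), dif_pos (Finset.mem_singleton_self k), one_mul]
    congr 1
    refine Finset.prod_congr rfl fun n hn => ?_
    have h : n ∉ ({k} : Finset (Fin N)) := by
      simpa using Finset.ne_of_mem_erase hn
    rw [dif_neg h, dif_neg h]
  rw [hBC]
  refine (Matrix.rank_mul_le_left B C).trans ?_
  simpa using Matrix.rank_le_card_width B
end

section
/- Let N be a positive integer, I R : Fin N → ℕ families of positive integers, and suppose a tensor X : (∀ n : Fin N, Fin (I n)) → ℝ admits a Tucker decomposition with core G : (∀ n : Fin N, Fin (R n)) → ℝ and factor matrices A n : Fin (I n) → Fin (R n) → ℝ, i.e., X i = ∑_{r : ∀ n, Fin (R n)} G r * ∏_{n : Fin N} A n (i n) (r n). Then for every mode k : Fin N, the mode-k unfolding of X has matrix rank at most the rank of the factor matrix A k (viewed as a matrix of size I k × R k). -/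
/-- If an order-`N` tensor admits a Tucker decomposition, then its mode-`k`
unfolding has matrix rank at most the rank of the `k`-th factor matrix. -/
theorem tucker_mode_unfolding_rank_le_factor_rank
    (N : ℕ) (hN : 0 < N)
    (I R : Fin N → ℕ) (hI : ∀ n : Fin N, 0 < I n) (hR : ∀ n : Fin N, 0 < R n)
    (X : (∀ n : Fin N, Fin (I n)) → ℝ)
    (G : (∀ n : Fin N, Fin (R n)) → ℝ)
    (A : ∀ n : Fin N, Fin (I n) → Fin (R n) → ℝ)
    (hX : ∀ i : ∀ n : Fin N, Fin (I n),
      X i = ∑ r : ∀ n : Fin N, Fin (R n), G r * ∏ n : Fin N, A n (i n) (r n))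
    (k : Fin N) :
    (unfolding I ({k} : Finset (Fin N)) X).rank ≤
      (Matrix.of (A k) : Matrix (Fin (I k)) (Fin (R k)) ℝ).rank := by
  have hk : k ∈ ({k} : Finset (Fin N)) := Finset.mem_singleton_self k
  have key : unfolding I ({k} : Finset (Fin N)) X =
      (Matrix.of fun (r : (n : {m : Fin N // m ∈ ({k} : Finset (Fin N))}) → Fin (I n.val))
          (i : Fin (I k)) => if i = r ⟨k, hk⟩ then (1 : ℝ) else 0) *
        ((Matrix.of (A k) : Matrix (Fin (I k)) (Fin (R k)) ℝ) *
        (Matrix.of fun (j : Fin (R k))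
          (c : (n : {m : Fin N // m ∉ ({k} : Finset (Fin N))}) → Fin (I n.val)) =>
          ∑ s : ∀ n : Fin N, Fin (R n), if j = s k then
            G s * ∏ n : {m : Fin N // m ∉ ({k} : Finset (Fin N))}, A n.val (c n) (s n.val)
            else 0)) := by
    ext r c
    simp only [unfolding, Matrix.mul_apply, Matrix.of_apply, hX, ite_mul, one_mul, zero_mul,
      Finset.sum_ite_eq', Finset.mem_univ, if_true]
    simp only [Finset.mul_sum, mul_ite, mul_zero]
    rw [Finset.sum_comm]
    refine Finset.sum_congr rfl fun s _ => ?_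
    simp only [Finset.sum_ite_eq', Finset.mem_univ, if_true]
    rw [← Fintype.prod_subtype_mul_prod_subtype (fun n => n ∈ ({k} : Finset (Fin N)))]
    have h1 : ∀ (inst : Fintype {m : Fin N // m ∈ ({k} : Finset (Fin N))})
        (f : {m : Fin N // m ∈ ({k} : Finset (Fin N))} → ℝ),
        ∏ n, f n = f ⟨k, hk⟩ := by
      intro inst f
      refine Fintype.prod_eq_single _ fun x hx => ?_
      exact absurd (Subtype.ext (Finset.mem_singleton.mp x.2)) hx
    rw [h1]
    have h2 : ∀ n : {m : Fin N // m ∉ ({k} : Finset (Fin N))},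
        A n.val (if h : n.val ∈ ({k} : Finset (Fin N)) then r ⟨n.val, h⟩ else c ⟨n.val, h⟩)
          (s n.val) = A n.val (c n) (s n.val) := by
      intro n
      rw [dif_neg n.2]
    rw [Finset.prod_congr rfl fun n _ => h2 n, dif_pos hk]
    ring
  rw [key]
  exact (Matrix.rank_mul_le_right _ _).trans (Matrix.rank_mul_le_left _ _)
end

section
/- Let N be a positive integer, I R : Fin N → ℕ families of positive integers, and suppose a tensor X : (∀ n : Fin N, Fin (I n)) → ℝ admits a Tucker decomposition with core G and factor matrices A n as above. Then for every subset S of Fin N, the generalized unfolding of X along S has matrix rank at most ∏_{n ∈ S} rank(A n), where rank(A n) is the matrix rank of the factor matrix A n of size I n × R n. -/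
theorem rank_fact_aux {m n : ℕ} (M : Matrix (Fin m) (Fin n) ℝ) :
    ∃ (B : Fin m → Fin M.rank → ℝ) (C : Fin M.rank → Fin n → ℝ),
      ∀ i j, M i j = ∑ k, B i k * C k j := by
  have hr : Module.finrank ℝ (LinearMap.range M.mulVecLin) = M.rank := rfl
  let b := Module.finBasisOfFinrankEq ℝ (LinearMap.range M.mulVecLin) hr
  refine ⟨fun i k => (b k : Fin m → ℝ) i,
    fun k j => b.repr ⟨M.mulVecLin (Pi.single j 1), LinearMap.mem_range_self _ _⟩ k, ?_⟩
  intro i j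
  have h := b.sum_repr ⟨M.mulVecLin (Pi.single j 1), LinearMap.mem_range_self _ _⟩
  have h2 := congrFun (congrArg Subtype.val h) i
  simp only [AddSubmonoidClass.coe_finsetSum, Submodule.coe_smul, Finset.sum_apply,
    Pi.smul_apply, smul_eq_mul, Matrix.mulVecLin_apply, Matrix.mulVec_single_one] at h2
  simp only [Matrix.col_apply] at h2
  rw [← h2]
  exact Finset.sum_congr rfl fun k _ => by rw [mul_comm]; simp

/-- If an order-`N` tensor admits a Tucker decomposition, then its generalized
unfolding along any subset `S` of its modes has matrix rank at most the product
of the ranks of the factor matrices of the modes in `S`. -/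
theorem tucker_unfolding_rank_le_prod_factor_ranks
    (N : ℕ) (hN : 0 < N)
    (I R : Fin N → ℕ) (hI : ∀ n : Fin N, 0 < I n) (hR : ∀ n : Fin N, 0 < R n)
    (X : (∀ n : Fin N, Fin (I n)) → ℝ)
    (G : (∀ n : Fin N, Fin (R n)) → ℝ)
    (A : ∀ n : Fin N, Fin (I n) → Fin (R n) → ℝ)
    (hX : ∀ i : ∀ n : Fin N, Fin (I n),
      X i = ∑ r : ∀ n : Fin N, Fin (R n), G r * ∏ n : Fin N, A n (i n) (r n))
    (S : Finset (Fin N)) :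
    (unfolding I S X).rank ≤
      ∏ n ∈ S, (Matrix.of (A n) : Matrix (Fin (I n)) (Fin (R n)) ℝ).rank := by
  choose B C hBC using fun n => rank_fact_aux (Matrix.of (A n))
  simp only [Matrix.of_apply] at hBC
  let P : Matrix ((n : {m : Fin N // m ∈ S}) → Fin (I n.val))
      ((n : {m : Fin N // m ∈ S}) → Fin (Matrix.of (A n.val)).rank) ℝ :=
    Matrix.of fun i k => ∏ n, B n.val (i n) (k n)
  let Q : Matrix ((n : {m : Fin N // m ∈ S}) → Fin (Matrix.of (A n.val)).rank)
      ((n : {m : Fin N // m ∉ S}) → Fin (I n.val)) ℝ :=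
    Matrix.of fun k c => ∑ r : ∀ n : Fin N, Fin (R n),
      G r * ((∏ n : {m : Fin N // m ∈ S}, C n.val (k n) (r n.val)) *
        ∏ n : {m : Fin N // m ∉ S}, A n.val (c n) (r n.val))
  have hPQ : unfolding I S X = P * Q := by
    ext i c
    simp only [unfolding, Matrix.of_apply, Matrix.mul_apply, P, Q, hX, Finset.mul_sum]
    rw [Finset.sum_comm]
    refine Finset.sum_congr rfl fun r _ => ?_
    have hsplit : ∀ f : Fin N → ℝ, ∏ n, f n =
        (∏ n : {m : Fin N // m ∈ S}, f n.val) * ∏ n : {m : Fin N // m ∉ S}, f n.val := by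
      intro f
      rw [← Fintype.prod_subtype_mul_prod_subtype (fun n => n ∈ S) f]
      congr!
    rw [hsplit]
    have h1 : ∀ n : {m : Fin N // m ∈ S},
        A n.val (if h : n.val ∈ S then i ⟨n.val, h⟩ else c ⟨n.val, h⟩) (r n.val)
          = ∑ k, B n.val (i n) k * C n.val k (r n.val) := by
      intro n
      rw [dif_pos n.2, hBC]
    have h2 : ∀ n : {m : Fin N // m ∉ S},
        A n.val (if h : n.val ∈ S then i ⟨n.val, h⟩ else c ⟨n.val, h⟩) (r n.val)
          = A n.val (c n) (r n.val) := by
      intro n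
      rw [dif_neg n.2]
    rw [Finset.prod_congr rfl fun n _ => h1 n, Finset.prod_congr rfl fun n _ => h2 n,
      Finset.prod_univ_sum, Fintype.piFinset_univ, Finset.sum_mul, Finset.mul_sum]
    refine Finset.sum_congr rfl fun k _ => ?_
    rw [Finset.prod_mul_distrib]
    ring
  rw [hPQ]
  refine (Matrix.rank_mul_le_left P Q).trans ((Matrix.rank_le_card_width P).trans ?_)
  rw [Fintype.card_pi]
  simp only [Fintype.card_fin]
  exact (Finset.prod_coe_sort S fun n => (Matrix.of (A n)).rank).le
end

section
/- Let N be a positive integer, I : Fin N → ℕ positive mode sizes, and let R : Fin (N+1) → ℕ be positive integers with R 0 = 1 and R N = 1. Suppose a tensor X : (∀ n : Fin N, Fin (I n)) → ℝ admits a Tensor Train (TT) decomposition with cores G n : Fin (I n) → Matrix (Fin (R n)) (Fin (R (n+1))) ℝ, i.e., X i equals the unique entry of the matrix product (G 0 (i 0)) * (G 1 (i 1)) * ⋯ * (G (N-1) (i (N-1))). Then for every d with 1 ≤ d ≤ N-1, the generalized unfolding of X along the set of modes {0, 1, …, d-1} has matrix rank at most R d. -/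
/-- Tensor Train rank bound: if an order-`N` tensor admits a TT decomposition
with cores `G n` of size `R n × R (n+1)` and boundary ranks `R 0 = R N = 1`
(so that each entry of the tensor is the unique entry of the corresponding
`1 × 1` chain matrix product, i.e. the sum over all rank paths of the products
of core entries), then for every `1 ≤ d ≤ N - 1` the generalized unfolding
along the first `d` modes `{0, 1, …, d-1}` has matrix rank at most `R d`. -/
theorem tt_unfolding_rank_le
    (N : ℕ) (hN : 0 < N)
    (I : Fin N → ℕ) (hI : ∀ n : Fin N, 0 < I n)
    (R : Fin (N + 1) → ℕ) (hR : ∀ n : Fin (N + 1), 0 < R n)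
    (hR0 : R 0 = 1) (hRN : R (Fin.last N) = 1)
    (X : (∀ n : Fin N, Fin (I n)) → ℝ)
    (G : ∀ n : Fin N, Fin (I n) → Matrix (Fin (R n.castSucc)) (Fin (R n.succ)) ℝ)
    (hX : ∀ i : ∀ n : Fin N, Fin (I n),
      X i = ∑ r : ∀ n : Fin (N + 1), Fin (R n),
        ∏ n : Fin N, G n (i n) (r n.castSucc) (r n.succ))
    (d : ℕ) (hd1 : 1 ≤ d) (hd2 : d ≤ N - 1) :
    (unfolding I (Finset.univ.filter (fun n : Fin N => n.val < d)) X).rank ≤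
      R ⟨d, by omega⟩ := by
  classical
  have hdN : d < N + 1 := by omega
  let D : Fin (N + 1) := ⟨d, hdN⟩
  let A := (n : {m : Fin (N + 1) // m.val < d}) → Fin (R n.val)
  let B := (n : {m : Fin (N + 1) // ¬ m.val < d}) → Fin (R n.val)
  let e : ((n : Fin (N + 1)) → Fin (R n)) ≃ A × B :=
    Equiv.piEquivPiSubtypeProd (fun m : Fin (N + 1) => m.val < d) (fun n => Fin (R n))
  let a0 : A := fun n => ⟨0, hR n.val⟩
  let b0 : B := fun n => ⟨0, hR n.val⟩
  let D' : {m : Fin (N + 1) // ¬ m.val < d} := ⟨D, lt_irrefl d⟩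
  let bk : Fin (R D) → B := fun k => Function.update b0 D' k
  have e_lt : ∀ (a : A) (b b' : B) (n : Fin (N + 1)), n.val < d →
      e.symm (a, b) n = e.symm (a, b') n := by
    intro a b b' n h
    simp [e, Equiv.piEquivPiSubtypeProd, h]
  have e_ge : ∀ (a a' : A) (b : B) (n : Fin (N + 1)), ¬ n.val < d →
      e.symm (a, b) n = e.symm (a', b) n := by
    intro a a' b n h
    simp [e, Equiv.piEquivPiSubtypeProd, h]
  have e_D : ∀ (a : A) (b : B), e.symm (a, b) D = b D' := by
    intro a b
    simp [e, Equiv.piEquivPiSubtypeProd, D, D']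
  have e_le : ∀ (a : A) (b : B) (n : Fin (N + 1)), n.val ≤ d →
      e.symm (a, b) n = e.symm (a, bk (b D')) n := by
    intro a b n h
    rcases h.lt_or_eq with h | h
    · exact e_lt _ _ _ _ h
    · obtain rfl : n = D := Fin.ext h
      rw [e_D, e_D]
      simp [bk]
  set S := Finset.univ.filter (fun n : Fin N => n.val < d) with hS
  have hmem : ∀ n : Fin N, n ∈ S ↔ n.val < d := by simp [hS]
  let L : Matrix ((n : {m : Fin N // m ∈ S}) → Fin (I n.val)) (Fin (R D)) ℝ :=
    Matrix.of fun row k => ∑ a : A, ∏ n : {m : Fin N // m ∈ S},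
      G n.val (row n) (e.symm (a, bk k) n.val.castSucc) (e.symm (a, bk k) n.val.succ)
  let M : Matrix (Fin (R D)) ((n : {m : Fin N // m ∉ S}) → Fin (I n.val)) ℝ :=
    Matrix.of fun k col => ∑ b : B, if b D' = k then ∏ n : {m : Fin N // m ∉ S},
      G n.val (col n) (e.symm (a0, b) n.val.castSucc) (e.symm (a0, b) n.val.succ) else 0
  have key : unfolding I S X = L * M := by
    ext row col
    simp only [unfolding, Matrix.of_apply, Matrix.mul_apply, L, M]
    rw [hX, ← Equiv.sum_comp e.symm, Fintype.sum_prod_type_right]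
    simp_rw [Finset.mul_sum, mul_ite, mul_zero]
    rw [Finset.sum_comm (γ := Fin (R D))]
    refine Finset.sum_congr rfl fun b _ => ?_
    rw [Finset.sum_ite_eq, if_pos (Finset.mem_univ _), Finset.sum_mul]
    refine Finset.sum_congr rfl fun a _ => ?_
    rw [← Fintype.prod_subtype_mul_prod_subtype (fun n : Fin N => n ∈ S)]
    congr 1
    · refine Finset.prod_congr (by ext; simp) fun n _ => ?_
      have hn := (hmem n.val).1 n.2
      rw [dif_pos n.2, e_le a b n.val.castSucc (by simpa using hn.le),
        e_le a b n.val.succ (by simpa using hn)]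
    · refine Finset.prod_congr (by ext; simp) fun n _ => ?_
      have hn : ¬ n.val.val < d := fun h => n.2 ((hmem n.val).2 h)
      rw [dif_neg n.2, e_ge a a0 b n.val.castSucc (by simpa using hn),
        e_ge a a0 b n.val.succ (by simp; omega)]
  rw [key]
  calc (L * M).rank ≤ L.rank := Matrix.rank_mul_le_left L M
    _ ≤ Fintype.card (Fin (R D)) := Matrix.rank_le_card_width L
    _ = R D := Fintype.card_fin _
end

section
/- Let I₁, I₂, I₃, I₄ and R₁, R₂, R₃ be positive integers, and suppose a tensor X : Fin I₁ × Fin I₂ × Fin I₃ × Fin I₄ → ℝ admits an order-4 Tensor Train decomposition X (i₁,i₂,i₃,i₄) = ∑_{r₁ : Fin R₁} ∑_{r₂ : Fin R₂} ∑_{r₃ : Fin R₃} A i₁ r₁ * B r₁ i₂ r₂ * C r₂ i₃ r₃ * D r₃ i₄, for cores A : Fin I₁ → Fin R₁ → ℝ, B : Fin R₁ → Fin I₂ → Fin R₂ → ℝ, C : Fin R₂ → Fin I₃ → Fin R₃ → ℝ, D : Fin R₃ → Fin I₄ → ℝ. Then the matrix with rows indexed by Fin I₁ × Fin I₃, columns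 indexed by Fin I₂ × Fin I₄, and entry at ((i₁,i₃),(i₂,i₄)) equal to X (i₁,i₂,i₃,i₄), has rank at most R₁ * R₂ * R₃. -/
/-- Order-4 Tensor Train: the interleaved unfolding pairing modes `{1,3}`
against modes `{2,4}` cuts all three TT edges, so its rank is at most
`R₁ * R₂ * R₃`. -/
theorem tt4_interleaved_unfolding_rank_le
    (I₁ I₂ I₃ I₄ R₁ R₂ R₃ : ℕ)
    (hI₁ : 0 < I₁) (hI₂ : 0 < I₂) (hI₃ : 0 < I₃) (hI₄ : 0 < I₄)
    (hR₁ : 0 < R₁) (hR₂ : 0 < R₂) (hR₃ : 0 < R₃)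
    (X : Fin I₁ × Fin I₂ × Fin I₃ × Fin I₄ → ℝ)
    (A : Fin I₁ → Fin R₁ → ℝ)
    (B : Fin R₁ → Fin I₂ → Fin R₂ → ℝ)
    (C : Fin R₂ → Fin I₃ → Fin R₃ → ℝ)
    (D : Fin R₃ → Fin I₄ → ℝ)
    (hX : ∀ (i₁ : Fin I₁) (i₂ : Fin I₂) (i₃ : Fin I₃) (i₄ : Fin I₄),
      X (i₁, i₂, i₃, i₄) = ∑ r₁ : Fin R₁, ∑ r₂ : Fin R₂, ∑ r₃ : Fin R₃,
        A i₁ r₁ * B r₁ i₂ r₂ * C r₂ i₃ r₃ * D r₃ i₄) :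
    (Matrix.of fun (p : Fin I₁ × Fin I₃) (q : Fin I₂ × Fin I₄) =>
        X (p.1, q.1, p.2, q.2)).rank ≤ R₁ * R₂ * R₃ := by
  have h : (Matrix.of fun (p : Fin I₁ × Fin I₃) (q : Fin I₂ × Fin I₄) =>
        X (p.1, q.1, p.2, q.2)) =
      (Matrix.of fun (p : Fin I₁ × Fin I₃) (r : Fin R₁ × Fin R₂ × Fin R₃) =>
        A p.1 r.1 * C r.2.1 p.2 r.2.2) *
      (Matrix.of fun (r : Fin R₁ × Fin R₂ × Fin R₃) (q : Fin I₂ × Fin I₄) =>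
        B r.1 q.1 r.2.1 * D r.2.2 q.2) := by
    ext p q
    simp only [Matrix.mul_apply, Matrix.of_apply, hX, Fintype.sum_prod_type]
    refine Finset.sum_congr rfl fun r₁ _ => Finset.sum_congr rfl fun r₂ _ =>
      Finset.sum_congr rfl fun r₃ _ => ?_
    ring
  rw [h]
  refine (Matrix.rank_mul_le_left _ _).trans ((Matrix.rank_le_card_width _).trans ?_)
  simp [mul_assoc]
end

section
/- Let I₁, I₂, I₃, I₄ and R₁, R₃, R₄ be positive integers, and suppose a tensor X : Fin I₁ × Fin I₂ × Fin I₃ × Fin I₄ → ℝ admits a Flex-Tucker decomposition X (i₁,i₂,i₃,i₄) = ∑_{s : Fin R₁} ∑_{r₃ : Fin R₃} ∑_{r₄ : Fin R₄} V i₁ i₂ s * G s r₃ r₄ * B i₃ r₃ * C i₄ r₄, where V : Fin I₁ → Fin I₂ → Fin R₁ → ℝ, G : Fin R₁ → Fin R₃ → Fin R₄ → ℝ, B : Fin I₃ → Fin R₃ → ℝ, C : Fin I₄ → Fin R₄ → ℝ. Then the matrix with rows indexed by Fin I₁ × Fin I₂, columns indexed by Fin I₃ × Fin I₄, and entry at ((i₁,i₂),(i₃,i₄))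 equal to X (i₁,i₂,i₃,i₄), has rank at most min(R₁, R₃ * R₄). -/
/-- Flex-Tucker decomposition: the unfolding separating modes `{1,2}` from
modes `{3,4}` has matrix rank at most `min R₁ (R₃ * R₄)`. -/
theorem flexTucker_spatial_unfolding_rank_le
    (I₁ I₂ I₃ I₄ R₁ R₃ R₄ : ℕ)
    (hI₁ : 0 < I₁) (hI₂ : 0 < I₂) (hI₃ : 0 < I₃) (hI₄ : 0 < I₄)
    (hR₁ : 0 < R₁) (hR₃ : 0 < R₃) (hR₄ : 0 < R₄)
    (X : Fin I₁ × Fin I₂ × Fin I₃ × Fin I₄ → ℝ)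
    (V : Fin I₁ → Fin I₂ → Fin R₁ → ℝ)
    (G : Fin R₁ → Fin R₃ → Fin R₄ → ℝ)
    (B : Fin I₃ → Fin R₃ → ℝ)
    (C : Fin I₄ → Fin R₄ → ℝ)
    (hX : ∀ (i₁ : Fin I₁) (i₂ : Fin I₂) (i₃ : Fin I₃) (i₄ : Fin I₄),
      X (i₁, i₂, i₃, i₄) = ∑ s : Fin R₁, ∑ r₃ : Fin R₃, ∑ r₄ : Fin R₄,
        V i₁ i₂ s * G s r₃ r₄ * B i₃ r₃ * C i₄ r₄) :
    (Matrix.of fun (p : Fin I₁ × Fin I₂) (q : Fin I₃ × Fin I₄) =>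
        X (p.1, p.2, q.1, q.2)).rank ≤ min R₁ (R₃ * R₄) := by
  have h : (Matrix.of fun (p : Fin I₁ × Fin I₂) (q : Fin I₃ × Fin I₄) =>
        X (p.1, p.2, q.1, q.2)) =
      (Matrix.of fun (p : Fin I₁ × Fin I₂) (s : Fin R₁) => V p.1 p.2 s) *
      ((Matrix.of fun (s : Fin R₁) (r : Fin R₃ × Fin R₄) => G s r.1 r.2) *
      (Matrix.of fun (r : Fin R₃ × Fin R₄) (q : Fin I₃ × Fin I₄) => B q.1 r.1 * C q.2 r.2)) := by
    ext p q
    simp only [Matrix.of_apply, Matrix.mul_apply, hX, Fintype.sum_prod_type, Finset.mul_sum,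
      mul_assoc]
  rw [h]
  refine le_min ?_ ?_
  · refine (Matrix.rank_mul_le_left _ _).trans ?_
    simpa using Matrix.rank_le_card_width
      (Matrix.of fun (p : Fin I₁ × Fin I₂) (s : Fin R₁) => V p.1 p.2 s)
  · refine (Matrix.rank_mul_le_right _ _).trans ((Matrix.rank_mul_le_right _ _).trans ?_)
    simpa using Matrix.rank_le_card_height
      (Matrix.of fun (r : Fin R₃ × Fin R₄) (q : Fin I₃ × Fin I₄) => B q.1 r.1 * C q.2 r.2)
end
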